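/- Let R be a commutative ring and B a finite étale R[[z]]-algebra. Then B₀ := B/zB is a finite étale R-algebra and there is an isomorphism of R[[z]]-algebras B ≅ B₀ ⊗_R R[[z]]. In particular, base change along R → R[[z]] induces an equivalence between finite étale R-algebras and finite étale R[[z]]-algebras. -/

import Mathlib

open scoped TensorProduct

set_option synthInstance.maxHeartbeats 1000000
set_option maxHeartbeats 1000000

universe u

/-- A finite projective module over an adically complete ring is adically complete. -/
theorem isAdicComplete_of_finite_projective {A M : Type u} [CommRing A] [AddCommGroup M]
    [Module A M] (I : Ideal A) [IsAdicComplete I A] [Module.Finite A M] [Module.Projective A M] :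
    IsAdicComplete I M := by
  obtain ⟨n, f, g, hf, hg, hfg⟩ := Module.Finite.exists_comp_eq_id_of_projective A M
  have hN : Function.Bijective (AdicCompletion.of I (Fin n → A)) := by
    have h1 : (AdicCompletion.piEquivFin I n) ∘ (AdicCompletion.of I (Fin n → A)) =
        fun x i => AdicCompletion.of I A (x i) := by
      funext x i
      simp only [Function.comp_apply, AdicCompletion.piEquivFin_apply]
      rfl
    have h2 : Function.Bijective (fun (x : Fin n → A) i => AdicCompletion.of I A (x i)) :=
      Function.Bijective.piMap fun _ => AdicCompletion.of_bijective I A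
    rw [← h1] at h2
    exact (Function.Bijective.of_comp_iff' (AdicCompletion.piEquivFin I n).bijective _).1 h2
  rw [← AdicCompletion.of_bijective_iff]
  constructor
  · intro x y hxy
    apply hg
    apply hN.1
    rw [← AdicCompletion.map_of, ← AdicCompletion.map_of, hxy]
  · intro y
    obtain ⟨z, hz⟩ := hN.2 (AdicCompletion.map I g y)
    refine ⟨f z, ?_⟩
    rw [← AdicCompletion.map_of, hz, AdicCompletion.map_comp_apply, hfg, AdicCompletion.map_id]
    rfl

theorem etale_of_bijective {R S : Type u} [CommRing R] [CommRing S] [Algebra R S]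
    (h : Function.Bijective (algebraMap R S)) : Algebra.Etale R S ∧ Module.Finite R S :=
  ⟨Algebra.Etale.of_equiv (AlgEquiv.ofBijective (Algebra.ofId R S) h),
    Module.Finite.of_surjective (Algebra.linearMap R S) h.2⟩

theorem bijective_powerSeries_quot (R : Type u) [CommRing R] :
    Function.Bijective (algebraMap R
      (PowerSeries R ⧸ (Ideal.span {PowerSeries.X} : Ideal (PowerSeries R)))) := by
  constructor
  · rw [injective_iff_map_eq_zero]
    intro r hr
    rw [IsScalarTower.algebraMap_apply R (PowerSeries R), Ideal.Quotient.algebraMap_eq,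
      Ideal.Quotient.eq_zero_iff_mem, Ideal.mem_span_singleton, PowerSeries.X_dvd_iff] at hr
    simpa using hr
  · intro y
    obtain ⟨a, rfl⟩ := Ideal.Quotient.mk_surjective y
    refine ⟨PowerSeries.constantCoeff a, ?_⟩
    rw [IsScalarTower.algebraMap_apply R (PowerSeries R), Ideal.Quotient.algebraMap_eq,
      Ideal.Quotient.eq, Ideal.mem_span_singleton, PowerSeries.X_dvd_iff]
    simp

theorem finite_etale_quot (R B : Type u) [CommRing R] [CommRing B]
    [Algebra (PowerSeries R) B] [Algebra R B] [IsScalarTower R (PowerSeries R) B]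
    [Module.Finite (PowerSeries R) B] [Algebra.Etale (PowerSeries R) B] :
    Module.Finite R (B ⧸ (Ideal.span {PowerSeries.X} : Ideal (PowerSeries R)).map
      (algebraMap (PowerSeries R) B)) ∧
    Algebra.Etale R (B ⧸ (Ideal.span {PowerSeries.X} : Ideal (PowerSeries R)).map
      (algebraMap (PowerSeries R) B)) := by
  set I := (Ideal.span {PowerSeries.X} : Ideal (PowerSeries R)) with hI
  obtain ⟨h1, h2⟩ := etale_of_bijective (bijective_powerSeries_quot R)
  have : IsScalarTower R (PowerSeries R ⧸ I)
      (B ⧸ I.map (algebraMap (PowerSeries R) B)) := by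
    refine IsScalarTower.of_algebraMap_eq (R := R) (S := PowerSeries R ⧸ I)
      (A := B ⧸ I.map (algebraMap (PowerSeries R) B)) fun x => ?_
    rw [IsScalarTower.algebraMap_apply R (PowerSeries R) (PowerSeries R ⧸ I),
      ← IsScalarTower.algebraMap_apply (PowerSeries R) (PowerSeries R ⧸ I)
        (B ⧸ I.map (algebraMap (PowerSeries R) B)),
      ← IsScalarTower.algebraMap_apply R (PowerSeries R)
        (B ⧸ I.map (algebraMap (PowerSeries R) B))]
  let e := Algebra.TensorProduct.quotIdealMapEquivQuotTensor B I
  have h3 : Algebra.Etale (PowerSeries R ⧸ I) (B ⧸ I.map (algebraMap (PowerSeries R) B)) :=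
    Algebra.Etale.of_equiv (A := (PowerSeries R ⧸ I) ⊗[PowerSeries R] B) e.symm
  have h4 : Module.Finite (PowerSeries R ⧸ I) (B ⧸ I.map (algebraMap (PowerSeries R) B)) :=
    Module.Finite.equiv e.symm.toLinearEquiv
  exact ⟨Module.Finite.trans (PowerSeries R ⧸ I) _, Algebra.Etale.comp R (PowerSeries R ⧸ I) _⟩

theorem projective_of_finite_etale (A B : Type u) [CommRing A] [CommRing B] [Algebra A B]
    [Module.Finite A B] [Algebra.Etale A B] : Module.Projective A B := by
  have : Module.FinitePresentation A B :=
    Module.FinitePresentation.of_finite_of_finitePresentation A B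
  exact Module.Flat.projective_of_finitePresentation

theorem finite_etale_aux (R B : Type u) [CommRing R] [CommRing B]
    [Algebra (PowerSeries R) B] [Algebra R B] [IsScalarTower R (PowerSeries R) B]
    [Module.Finite (PowerSeries R) B] [Algebra.Etale (PowerSeries R) B]
    (J : Ideal B) (hJ : J = (Ideal.span {PowerSeries.X} : Ideal (PowerSeries R)).map
      (algebraMap (PowerSeries R) B)) [Module.Finite R (B ⧸ J)] [Algebra.Etale R (B ⧸ J)] :
    Nonempty (B ≃ₐ[PowerSeries R] (PowerSeries R ⊗[R] (B ⧸ J))) := by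
  set I := (Ideal.span {PowerSeries.X} : Ideal (PowerSeries R)) with hI
  have hjac : I ≤ (⊥ : Ideal (PowerSeries R)).jacobson := IsAdicComplete.le_jacobson_bot I
  have hproj := projective_of_finite_etale (PowerSeries R) B
  have hBc : IsAdicComplete I B := isAdicComplete_of_finite_projective I
  have hBJ : IsAdicComplete J B := by
    rw [hJ]
    exact (IsAdicComplete.map_algebraMap_iff I B).2 hBc
  obtain ⟨g, hg⟩ := Algebra.FormallySmooth.exists_mkₐ_comp_eq_of_isAdicComplete
    (AlgHom.id R (B ⧸ J))
  have hg' : ∀ x, Ideal.Quotient.mk J (g x) = x := fun x => DFunLike.congr_fun hg x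
  let φ : PowerSeries R ⊗[R] (B ⧸ J) →ₐ[PowerSeries R] B :=
    Algebra.TensorProduct.lift (Algebra.ofId _ _) g (fun _ _ => Commute.all _ _)
  have hφ : ∀ a b, φ (a ⊗ₜ b) = algebraMap (PowerSeries R) B a * g b := fun a b => by
    simp [φ, Algebra.ofId_apply]
  have hJsmul : ∀ b : B, b ∈ J → b ∈ (I • ⊤ : Submodule (PowerSeries R) B) := by
    intro b hb
    rw [Ideal.smul_top_eq_map, ← hJ]
    exact hb
  have hsurj : Function.Surjective φ := by
    rw [← AlgHom.coe_toLinearMap, ← LinearMap.range_eq_top, eq_top_iff]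
    refine Submodule.le_of_le_smul_of_le_jacobson_bot Module.Finite.fg_top hjac ?_
    intro b _
    have : b = φ (1 ⊗ₜ Ideal.Quotient.mk J b) + (b - g (Ideal.Quotient.mk J b)) := by
      rw [hφ]; simp
    rw [this]
    refine Submodule.add_mem_sup ⟨1 ⊗ₜ Ideal.Quotient.mk J b, rfl⟩ (hJsmul _ ?_)
    rw [← Ideal.Quotient.eq, hg']
  have hcong : ∀ c, c - 1 ⊗ₜ Ideal.Quotient.mk J (φ c) ∈
      (I • ⊤ : Submodule (PowerSeries R) (PowerSeries R ⊗[R] (B ⧸ J))) := by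
    intro c
    induction c with
    | zero => simp
    | add x y hx hy =>
      have := add_mem hx hy
      rw [map_add, map_add, TensorProduct.tmul_add]
      convert this using 1
      abel
    | tmul a b =>
      rw [hφ, map_mul, hg']
      obtain ⟨a', r, rfl⟩ : ∃ (a' : PowerSeries R) (r : R),
          a = PowerSeries.X * a' + algebraMap R (PowerSeries R) r :=
        ⟨_, _, PowerSeries.eq_X_mul_shift_add_const a⟩
      have h1 : Ideal.Quotient.mk J (algebraMap (PowerSeries R) B
          (PowerSeries.X * a' + algebraMap R (PowerSeries R) r)) = algebraMap R (B ⧸ J) r := by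
        have h0 : Ideal.Quotient.mk J (algebraMap (PowerSeries R) B PowerSeries.X) = 0 := by
          rw [Ideal.Quotient.eq_zero_iff_mem, hJ]
          exact Ideal.mem_map_of_mem _ (Ideal.mem_span_singleton_self _)
        rw [map_add, map_add, map_mul, map_mul, h0, zero_mul, zero_add,
          ← IsScalarTower.algebraMap_apply]
        rfl
      rw [h1, ← Algebra.smul_def, TensorProduct.tmul_smul, TensorProduct.add_tmul,
        Algebra.algebraMap_eq_smul_one, TensorProduct.smul_tmul', add_sub_cancel_right,
        ← smul_eq_mul, ← TensorProduct.smul_tmul']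
      exact Submodule.smul_mem_smul (Ideal.mem_span_singleton_self _) trivial
  have hinj : Function.Injective φ := by
    obtain ⟨s, hs⟩ := Module.projective_lifting_property φ.toLinearMap LinearMap.id hsurj
    have hs' : ∀ b, φ (s b) = b := fun b => DFunLike.congr_fun hs b
    let p : (PowerSeries R ⊗[R] (B ⧸ J)) →ₗ[PowerSeries R] (PowerSeries R ⊗[R] (B ⧸ J)) :=
      LinearMap.id - s ∘ₗ φ.toLinearMap
    have hp : ∀ x, p x = x - s (φ x) := fun x => rfl
    have hbot : LinearMap.range p = ⊥ := by
      refine Submodule.eq_bot_of_le_smul_of_le_jacobson_bot I _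
        ((Module.Finite.fg_top).map p |> fun h => by rwa [Submodule.map_top] at h) ?_ hjac
      rintro _ ⟨x, rfl⟩
      have hφp : φ (p x) = 0 := by rw [hp, map_sub, hs', sub_self]
      have h1 := hcong (p x)
      rw [hφp, map_zero, TensorProduct.tmul_zero, sub_zero] at h1
      have h2 : p (p x) = p x := by rw [hp (p x), hφp, map_zero, sub_zero]
      rw [← h2, ← Submodule.map_top, ← Submodule.map_smul'']
      exact Submodule.mem_map_of_mem h1
    rw [injective_iff_map_eq_zero]
    intro x hx
    have h1 : p x = x := by rw [hp, hx, map_zero, sub_zero]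
    have h2 : p x ∈ LinearMap.range p := ⟨x, rfl⟩
    rw [hbot, h1] at h2
    simpa using h2
  exact ⟨(AlgEquiv.ofBijective φ ⟨hinj, hsurj⟩).symm⟩

/-- Let `B` be a finite étale `R[[z]]`-algebra. Then `B₀ := B/zB` is a finite étale
`R`-algebra and `B ≅ B₀ ⊗_R R[[z]]` as `R[[z]]`-algebras. -/
theorem finite_etale_algebra_over_powerSeries (R B : Type u) [CommRing R] [CommRing B]
    [Algebra (PowerSeries R) B] [Algebra R B] [IsScalarTower R (PowerSeries R) B]
    [Module.Finite (PowerSeries R) B] [Algebra.Etale (PowerSeries R) B] :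
    Module.Finite R
        (B ⧸ Ideal.span {algebraMap (PowerSeries R) B PowerSeries.X}) ∧
      Algebra.Etale R
        (B ⧸ Ideal.span {algebraMap (PowerSeries R) B PowerSeries.X}) ∧
      Nonempty (B ≃ₐ[PowerSeries R]
        (PowerSeries R ⊗[R]
          (B ⧸ Ideal.span {algebraMap (PowerSeries R) B PowerSeries.X}))) := by
  have hJ : Ideal.span {algebraMap (PowerSeries R) B PowerSeries.X} =
      (Ideal.span {PowerSeries.X} : Ideal (PowerSeries R)).map (algebraMap (PowerSeries R) B) := by
    rw [Ideal.map_span, Set.image_singleton]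
  have h := finite_etale_quot R B
  rw [← hJ] at h
  obtain ⟨h1, h2⟩ := h
  exact ⟨h1, h2, finite_etale_aux R B _ hJ⟩
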